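/- arXiv:math/0603483 — 2 statements merged into one kernel-verified Lean document; each statement's English description precedes it below -/
import Mathlib

section
/- Let G be a Lie group, Γ < G a discrete subgroup, X = Γ\G with the right translation action of G, and let H < G be a subgroup isomorphic as a topological group to SL(2,ℝ) via an isomorphism θ : SL(2,ℝ) → H. Let μ be an H-invariant and H-ergodic Borel probability measure on X, and let U = θ({[[1,t],[0,1]] : t ∈ ℝ}) be the one-parameter unipotent subgroup of H corresponding to the upper unipotent subgroup of SL(2,ℝ). Then μ is also U-ergodic: every measurable subset of X invariant under right translation by all elements of U has μ-measure 0 or 1. -/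
open MeasureTheory Manifold Matrix

/-- `SL(2,ℝ)`. -/
abbrev SL2R := Matrix.SpecialLinearGroup (Fin 2) ℝ

/-- The standard topology on `SL(2,ℝ)`, as a subspace of the 2×2 real matrices. -/
noncomputable instance : TopologicalSpace SL2R := instTopologicalSpaceSubtype

/-- The upper unipotent element `[[1, t], [0, 1]]` of `SL(2,ℝ)`. -/
def upperUnipotent (t : ℝ) : SL2R :=
  ⟨!![1, t; 0, 1], by simp [Matrix.det_fin_two_of]⟩

/-- The space of right cosets `Γ\G`. -/
def RightQuot {G : Type*} [Group G] (Γ : Subgroup G) : Type _ :=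
  Quotient (QuotientGroup.rightRel Γ)

section Basic

variable {G : Type*} [Group G] [TopologicalSpace G]

instance (Γ : Subgroup G) : TopologicalSpace (RightQuot Γ) :=
  inferInstanceAs (TopologicalSpace (Quotient (QuotientGroup.rightRel Γ)))

noncomputable instance (Γ : Subgroup G) : MeasurableSpace (RightQuot Γ) := borel _

instance (Γ : Subgroup G) : BorelSpace (RightQuot Γ) := ⟨rfl⟩

/-- Right translation by `g ∈ G` on the right coset space `Γ\G`,
sending `Γh` to `Γhg`. -/
def rightTranslate (Γ : Subgroup G) (g : G) : RightQuot Γ → RightQuot Γ :=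
  Quotient.map' (· * g) (fun a b h => by
    rw [QuotientGroup.rightRel_apply] at h ⊢
    have : b * g * (a * g)⁻¹ = b * a⁻¹ := by group
    rw [this]; exact h)

end Basic


noncomputable section MautnerAux

instance sl2_topGroup : IsTopologicalGroup SL2R :=
  Matrix.SpecialLinearGroup.topologicalGroup

instance sl2_sc : SecondCountableTopology SL2R :=
  haveI : SecondCountableTopology (Matrix (Fin 2) (Fin 2) ℝ) :=
    inferInstanceAs (SecondCountableTopology (Fin 2 → Fin 2 → ℝ))
  TopologicalSpace.Subtype.secondCountableTopology {A : Matrix (Fin 2) (Fin 2) ℝ | A.det = 1}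

instance sl2_t2 : T2Space SL2R :=
  inferInstanceAs (T2Space {A : Matrix (Fin 2) (Fin 2) ℝ // A.det = 1})

instance sl2_lc : LocallyCompactSpace SL2R := by
  have h : IsClosed {A : Matrix (Fin 2) (Fin 2) ℝ | A.det = 1} :=
    isClosed_eq (Continuous.matrix_det continuous_id) continuous_const
  have : LocallyCompactSpace (Matrix (Fin 2) (Fin 2) ℝ) :=
    inferInstanceAs (LocallyCompactSpace (Fin 2 → Fin 2 → ℝ))
  exact h.isClosedEmbedding_subtypeVal.locallyCompactSpace

/-- lower unipotent -/
def lowU (t : ℝ) : SL2R := ⟨!![1, 0; t, 1], by simp [Matrix.det_fin_two_of]⟩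

/-- diagonal -/
def diagU (a : ℝ) (ha : a ≠ 0) : SL2R :=
  ⟨!![a, 0; 0, a⁻¹], by simp [Matrix.det_fin_two_of, ha]⟩

lemma lowU_continuous : Continuous lowU := by
  refine Continuous.subtype_mk (f := fun t : ℝ => !![1, 0; t, 1]) ?_ _
  refine continuous_matrix fun i j => ?_
  fin_cases i <;> fin_cases j <;> simp <;> fun_prop

lemma lowU_zero : lowU 0 = 1 := by
  ext i j; fin_cases i <;> fin_cases j <;> simp [lowU]

lemma diag_eq (a ε : ℝ) (ha : a ≠ 0) (hε : ε ≠ 0) :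
    diagU a ha = upperUnipotent ((a-1)/ε) * lowU ε * upperUnipotent (-((a-1)/ε)/a)
      * lowU (-a*ε) := by
  ext i j
  simp only [Matrix.SpecialLinearGroup.coe_mul]
  fin_cases i <;> fin_cases j <;>
    simp [lowU, diagU, upperUnipotent, Matrix.mul_apply, Fin.sum_univ_two] <;> field_simp <;> ring

lemma low_eq (a t : ℝ) (ha : a ≠ 0) :
    lowU t = diagU a ha * lowU (a^2*t) * diagU a⁻¹ (inv_ne_zero ha) := by
  ext i j
  simp only [Matrix.SpecialLinearGroup.coe_mul]
  fin_cases i <;> fin_cases j <;>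
    simp [lowU, diagU, Matrix.mul_apply, Fin.sum_univ_two] <;> field_simp

lemma gen_eq (g : SL2R) : (∃ x y z, g = upperUnipotent x * lowU y * upperUnipotent z) ∨
    ∃ a, ∃ ha : a ≠ 0, ∃ x, g = diagU a ha * upperUnipotent x := by
  have hdet : g 0 0 * g 1 1 - g 0 1 * g 1 0 = 1 := by
    have := g.det_coe; rwa [Matrix.det_fin_two] at this
  by_cases hc : g 1 0 = 0
  · right
    rw [hc] at hdet
    have ha : g 0 0 ≠ 0 := by intro h; simp [h] at hdet
    refine ⟨g 0 0, ha, g 0 1 / g 0 0, ?_⟩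
    have hd : g 1 1 = (g 0 0)⁻¹ := by field_simp; linarith
    ext i j
    simp only [Matrix.SpecialLinearGroup.coe_mul]
    fin_cases i <;> fin_cases j <;>
      simp [diagU, upperUnipotent, Matrix.mul_apply, Fin.sum_univ_two, hc, hd] <;> field_simp
  · left
    refine ⟨(g 0 0 - 1) / g 1 0, g 1 0, (g 1 1 - 1) / g 1 0, ?_⟩
    ext i j
    simp only [Matrix.SpecialLinearGroup.coe_mul]
    fin_cases i <;> fin_cases j <;>
      simp [lowU, upperUnipotent, Matrix.mul_apply, Fin.sum_univ_two] <;> field_simp <;>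
      linarith

open Filter Topology in
/-- A continuous subadditive length function vanishing on the upper unipotents vanishes. -/
lemma length_zero (D : SL2R → ENNReal) (hsub : ∀ g h, D (g * h) ≤ D g + D h)
    (hu : ∀ t, D (upperUnipotent t) = 0)
    (hcont : ∀ g : ℕ → SL2R, Tendsto g atTop (𝓝 1) → Tendsto (fun n => D (g n)) atTop (𝓝 0))
    (g : SL2R) : D g = 0 := by
  have hl : ∀ c : ℝ, ∀ e : ℕ → ℝ, Tendsto e atTop (𝓝 0) →
      Tendsto (fun n => D (lowU (c * e n))) atTop (𝓝 0) := by
    intro c e he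
    apply hcont
    have h1 : Tendsto (fun n => c * e n) atTop (𝓝 0) := by simpa using he.const_mul c
    have := (lowU_continuous.tendsto 0).comp h1
    rwa [lowU_zero] at this
  have he : Tendsto (fun n : ℕ => 1 / ((n : ℝ) + 1)) atTop (𝓝 0) :=
    tendsto_one_div_add_atTop_nhds_zero_nat
  have hdiag : ∀ a ha, D (diagU a ha) = 0 := by
    intro a ha
    refine le_antisymm ?_ zero_le
    have h2 := (hl 1 _ he).add (hl (-a) _ he)
    rw [add_zero] at h2
    refine ge_of_tendsto' h2 fun n => ?_
    have hn : (1 / ((n : ℝ) + 1)) ≠ 0 := by positivity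
    rw [diag_eq a _ ha hn]
    refine (hsub _ _).trans ?_
    gcongr
    refine (hsub _ _).trans ?_
    rw [hu, add_zero]
    refine (hsub _ _).trans ?_
    rw [hu, zero_add, one_mul]
  have hlow : ∀ t, D (lowU t) = 0 := by
    intro t
    refine le_antisymm ?_ zero_le
    have h2 := hl t (fun n : ℕ => (1 / ((n : ℝ) + 1))^2) (by simpa using he.pow 2)
    refine ge_of_tendsto' h2 fun n => ?_
    have hn : (1 / ((n : ℝ) + 1)) ≠ 0 := by positivity
    rw [low_eq _ t hn]
    refine (hsub _ _).trans ?_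
    rw [hdiag, add_zero]
    refine (hsub _ _).trans ?_
    rw [hdiag, zero_add, mul_comm]
  refine le_antisymm ?_ zero_le
  rcases gen_eq g with ⟨x, y, z, rfl⟩ | ⟨a, ha, x, rfl⟩
  · refine (hsub _ _).trans ?_
    rw [hu, add_zero]
    refine (hsub _ _).trans ?_
    rw [hu, hlow, add_zero]
  · refine (hsub _ _).trans ?_
    rw [hu, hdiag, add_zero]

open Filter Topology

section dyn

variable {X : Type*} [TopologicalSpace X] [MeasurableSpace X] [BorelSpace X]
  (μ : Measure X) [IsProbabilityMeasure μ]

/-- If maps `f n` preserve `μ` and converge pointwise to the identity then they move each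
Borel set asymptotically little. -/
lemma tendsto_symmDiff (f : ℕ → X → X) (hf : ∀ n, MeasurePreserving (f n) μ μ)
    (hlim : ∀ x, Tendsto (fun n => f n x) atTop (𝓝 x)) (s : Set X) (hs : MeasurableSet s) :
    Tendsto (fun n => μ (symmDiff (f n ⁻¹' s) s)) atTop (𝓝 0) := by
  induction s, hs using MeasurableSet.induction_on_open with
  | isOpen s hs =>
    have hsm := hs.measurableSet
    have h1 : Tendsto (fun n => μ (s \ f n ⁻¹' s)) atTop (𝓝 (μ ∅)) := by
      refine tendsto_measure_of_tendsto_indicator_of_isFiniteMeasure atTop μ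
        (fun n => hsm.diff ((hf n).measurable hsm)) ?_
      intro x
      by_cases hx : x ∈ s
      · filter_upwards [(hlim x).eventually_mem (hs.mem_nhds hx)] with n hn
        simp [hn]
      · simp [hx]
    have h2 : ∀ n, μ (f n ⁻¹' s \ s) = μ (s \ f n ⁻¹' s) := fun n =>
      measure_sdiff_symm ((hf n).measurable hsm).nullMeasurableSet hsm.nullMeasurableSet
        ((hf n).measure_preimage hsm.nullMeasurableSet) (measure_ne_top _ _)
    have h3 : ∀ n, μ (symmDiff (f n ⁻¹' s) s) = μ (s \ f n ⁻¹' s) + μ (s \ f n ⁻¹' s) := by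
      intro n
      rw [measure_symmDiff_eq ((hf n).measurable hsm).nullMeasurableSet hsm.nullMeasurableSet, h2]
    simp only [h3]
    simpa using h1.add h1
  | compl t ht ih =>
    have : ∀ n, symmDiff (f n ⁻¹' tᶜ) tᶜ = symmDiff (f n ⁻¹' t) t := by
      intro n; rw [Set.preimage_compl]; exact compl_symmDiff_compl _ _
    simpa only [this] using ih
  | iUnion t hd ht ih =>
    have h1 : Tendsto (fun n => ∫⁻ i : ℕ, μ (symmDiff (f n ⁻¹' (t i)) (t i)) ∂Measure.count)
        atTop (𝓝 (∫⁻ _ : ℕ, 0 ∂Measure.count)) := by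
      refine tendsto_lintegral_of_dominated_convergence (fun i => 2 * μ (t i))
        (fun n => measurable_of_countable _) ?_ ?_ (Eventually.of_forall ih)
      · intro n
        refine Eventually.of_forall fun i => ?_
        calc μ (symmDiff (f n ⁻¹' (t i)) (t i)) ≤ μ (f n ⁻¹' (t i) ∪ t i) :=
              measure_mono symmDiff_le_sup
          _ ≤ μ (f n ⁻¹' (t i)) + μ (t i) := measure_union_le _ _
          _ = 2 * μ (t i) := by
              rw [(hf n).measure_preimage (ht i).nullMeasurableSet, two_mul]
      · rw [lintegral_count, ENNReal.tsum_mul_left, ← measure_iUnion hd ht]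
        exact ENNReal.mul_ne_top (by simp) (measure_ne_top _ _)
    simp only [lintegral_count, tsum_zero] at h1
    refine tendsto_of_tendsto_of_tendsto_of_le_of_le tendsto_const_nhds h1
      (fun _ => zero_le) fun n => ?_
    refine le_trans (measure_mono ?_) (measure_iUnion_le _)
    rw [Set.preimage_iUnion]
    exact Set.iUnion_symmDiff_iUnion_subset

/-- The abstract dynamical statement for right actions of `SL(2,ℝ)`. -/
lemma mautner_action (T : SL2R → X → X) (hone : ∀ x, T 1 x = x)
    (hmul : ∀ g h x, T (g * h) x = T h (T g x))
    (hc : Continuous (fun p : SL2R × X => T p.1 p.2))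
    (hmp : ∀ g, MeasurePreserving (T g) μ μ)
    (herg : ∀ s : Set X, MeasurableSet s → (∀ g, T g ⁻¹' s = s) → μ s = 0 ∨ μ s = 1)
    (s : Set X) (hs : MeasurableSet s) (hu : ∀ t, T (upperUnipotent t) ⁻¹' s = s) :
    μ s = 0 ∨ μ s = 1 := by
  have hD : ∀ g, μ (symmDiff (T g ⁻¹' s) s) = 0 := by
    refine length_zero (fun g => μ (symmDiff (T g ⁻¹' s) s)) ?_ ?_ ?_
    · intro g h
      have e : T (g * h) ⁻¹' s = T g ⁻¹' (T h ⁻¹' s) := by ext x; simp [hmul]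
      have hh := (hmp h).measurable hs
      calc μ (symmDiff (T (g * h) ⁻¹' s) s)
          ≤ μ (symmDiff (T (g * h) ⁻¹' s) (T g ⁻¹' s)) + μ (symmDiff (T g ⁻¹' s) s) :=
            measure_symmDiff_le _ _ _
        _ = μ (symmDiff (T h ⁻¹' s) s) + μ (symmDiff (T g ⁻¹' s) s) := by
            rw [e, ← Set.preimage_symmDiff,
              (hmp g).measure_preimage (hh.symmDiff hs).nullMeasurableSet]
        _ = _ := add_comm _ _
    · intro t; simp [hu]
    · intro g hg
      refine tendsto_symmDiff μ (fun n => T (g n)) (fun n => hmp _) (fun x => ?_) s hs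
      have h1 : Continuous (fun g => T g x) := hc.comp (by fun_prop : Continuous fun g => (g, x))
      have := (h1.tendsto 1).comp hg
      rwa [hone] at this
  letI : MeasurableSpace SL2R := borel _
  haveI : BorelSpace SL2R := ⟨rfl⟩
  let ν : Measure SL2R := Measure.haar
  have hms : MeasurableSet {p : X × SL2R | T p.2 p.1 ∈ s} := by
    have : Measurable (fun p : X × SL2R => T p.2 p.1) := (hc.comp continuous_swap).measurable
    exact this hs
  set s' : Set X := {x | ∀ᵐ g ∂ν, T g x ∈ s} with hs'
  have hs'm : MeasurableSet s' := by
    have := measurable_measure_prodMk_left (ν := ν) hms.compl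
    exact this (measurableSet_singleton 0)
  have hs'inv : ∀ g, T g ⁻¹' s' = s' := by
    intro g
    ext x
    simp only [hs', Set.mem_preimage, Set.mem_ofPred_eq, ← hmul]
    exact eventually_mul_left_iff ν g (p := fun h => T h x ∈ s)
  have hae : ∀ᵐ x ∂μ, ∀ᵐ g ∂ν, (T g x ∈ s ↔ x ∈ s) := by
    rw [Measure.ae_ae_comm (p := fun x g => (T g x ∈ s ↔ x ∈ s))]
    · refine Eventually.of_forall fun g => ?_
      have := measure_symmDiff_eq_zero_iff.1 (hD g)
      exact this.mem_iff
    · exact hms.iff (measurable_fst hs)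
  have heq : s' =ᵐ[μ] s := by
    refine eventuallyEq_set.2 ?_
    filter_upwards [hae] with x hx
    by_cases h : x ∈ s
    · simpa [h, hs'] using hx
    · simp only [h, iff_false] at hx ⊢
      intro h'
      have : ∀ᵐ g ∂ν, False := by
        filter_upwards [hx, h'] with g h1 h2 using h1 h2
      rw [eventually_false_iff_eq_bot, ae_eq_bot] at this
      exact NeZero.ne ν this
  rw [← measure_congr heq]
  exact herg s' hs'm hs'inv

end dyn
end MautnerAux

/-- **Mautner ergodicity.**  If `μ` is an `H`-invariant and `H`-ergodic Borel probability
measure on `X = Γ\G`, where `H < G` is isomorphic as a topological group to `SL(2,ℝ)`, then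
`μ` is already ergodic for the one-parameter unipotent subgroup `U` of `H` corresponding to
the upper unipotent subgroup of `SL(2,ℝ)`. -/
theorem mautner_unipotent_ergodicity
    {E : Type*} [NormedAddCommGroup E] [NormedSpace ℝ E] [FiniteDimensional ℝ E]
    {G : Type*} [Group G] [TopologicalSpace G] [IsTopologicalGroup G]
    [ChartedSpace E G] [LieGroup (modelWithCornersSelf ℝ E) (⊤ : ℕ∞) G]
    (Γ : Subgroup G) [DiscreteTopology Γ]
    (H : Subgroup G)
    (θ : SL2R ≃* H) (hθ : Continuous θ) (hθsymm : Continuous θ.symm)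
    (μ : Measure (RightQuot Γ)) [IsProbabilityMeasure μ]
    (hinv : ∀ h ∈ H, Measure.map (rightTranslate Γ h) μ = μ)
    (herg : ∀ s : Set (RightQuot Γ), MeasurableSet s →
      (∀ h ∈ H, rightTranslate Γ h ⁻¹' s = s) → μ s = 0 ∨ μ s = 1) :
    ∀ s : Set (RightQuot Γ), MeasurableSet s →
      (∀ t : ℝ, rightTranslate Γ ((θ (upperUnipotent t) : H) : G) ⁻¹' s = s) →
      μ s = 0 ∨ μ s = 1 := by
  intro s hs hsu
  have hcG : Continuous (fun p : RightQuot Γ × G => rightTranslate Γ p.2 p.1) := by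
    have hq : IsOpenQuotientMap (Quotient.mk (QuotientGroup.rightRel Γ)) := by
      refine ⟨Quotient.mk_surjective, continuous_quotient_mk', ?_⟩
      intro U hU
      have e : Quotient.mk (QuotientGroup.rightRel Γ) ⁻¹'
          (Quotient.mk (QuotientGroup.rightRel Γ) '' U) = ⋃ γ : Γ, (fun x => (γ : G) * x) ⁻¹' U := by
        ext x
        simp only [Set.mem_preimage, Set.mem_image, Set.mem_iUnion]
        constructor
        · rintro ⟨y, hy, hxy⟩
          have := QuotientGroup.rightRel_apply.1 (Quotient.exact hxy.symm)
          exact ⟨⟨_, this⟩, by simpa using hy⟩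
        · rintro ⟨γ, hγ⟩
          refine ⟨_, hγ, Quotient.sound ?_⟩
          refine QuotientGroup.rightRel_apply.2 ?_
          simp
      refine isOpen_coinduced.2 ?_
      change IsOpen (Quotient.mk (QuotientGroup.rightRel Γ) ⁻¹'
          (Quotient.mk (QuotientGroup.rightRel Γ) '' U))
      rw [e]
      exact isOpen_iUnion fun γ => hU.preimage (continuous_const_mul _)
    have hq2 := hq.prodMap (IsOpenQuotientMap.id (X := G))
    refine hq2.isQuotientMap.continuous_iff.2 ?_
    change Continuous (fun p : G × G => Quotient.mk (QuotientGroup.rightRel Γ) (p.1 * p.2))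
    exact hq.continuous.comp continuous_mul
  refine mautner_action μ (fun g x => rightTranslate Γ ((θ g : H) : G) x) ?_ ?_ ?_ ?_ ?_ s hs hsu
  · intro x
    induction x using Quotient.inductionOn with
    | h a => simp [rightTranslate]; rfl
  · intro g h x
    induction x using Quotient.inductionOn with
    | h a => simp [rightTranslate, mul_assoc]; rfl
  · exact hcG.comp (continuous_snd.prodMk
      (continuous_subtype_val.comp (hθ.comp continuous_fst)))
  · intro g
    exact ⟨(hcG.comp (continuous_id.prodMk continuous_const)).measurable, hinv _ (θ g).2⟩
  · intro s hs hg
    refine herg s hs fun h hh => ?_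
    have := hg (θ.symm ⟨h, hh⟩)
    simpa using this
end

section
/- Let S be a closed subgroup of GL(m,ℝ). Suppose (w_k) is a sequence of nonzero real m×m matrices with w_k → 0, exp(w_k) ∈ S for all k, and w_k/‖w_k‖ → u for some matrix u. Then the one-parameter subgroup generated by u lies in S: exp(t·u) ∈ S for all t ∈ ℝ. -/
open scoped MatrixGroups

attribute [local instance] Matrix.normedAddCommGroup Matrix.normedSpace

theorem exp_continuous_of_finiteDimensional_aux (A : Type) [NormedRing A] [NormedAlgebra ℝ A]
    [FiniteDimensional ℝ A] : Continuous (NormedSpace.exp : A → A) := by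
  let : NormedAlgebra ℚ A := NormedAlgebra.restrictScalars ℚ ℝ A
  have : CompleteSpace A := FiniteDimensional.complete ℝ A
  exact NormedSpace.exp_continuous

theorem matrix_exp_continuous_aux (m : ℕ) :
    Continuous (NormedSpace.exp : Matrix (Fin m) (Fin m) ℝ → Matrix (Fin m) (Fin m) ℝ) := by
  let : NormedRing (Matrix (Fin m) (Fin m) ℝ) := Matrix.linftyOpNormedRing
  let : NormedAlgebra ℝ (Matrix (Fin m) (Fin m) ℝ) := Matrix.linftyOpNormedAlgebra
  exact exp_continuous_of_finiteDimensional_aux (Matrix (Fin m) (Fin m) ℝ)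

/-- The matrix exponential as an element of the general linear group. -/
noncomputable def expGLAux (m : ℕ) (A : Matrix (Fin m) (Fin m) ℝ) : GL (Fin m) ℝ where
  val := NormedSpace.exp A
  inv := NormedSpace.exp (-A)
  val_inv := by
    rw [← Matrix.exp_add_of_commute _ _ (Commute.neg_right (Commute.refl A))]
    simp
  inv_val := by
    rw [← Matrix.exp_add_of_commute _ _ (Commute.neg_left (Commute.refl A))]
    simp

theorem expGLAux_continuous (m : ℕ) : Continuous (expGLAux m) := by
  rw [Units.continuous_iff]
  exact ⟨matrix_exp_continuous_aux m, (matrix_exp_continuous_aux m).comp continuous_neg⟩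

/-- If `S` is a closed subgroup of `GL(m,ℝ)`, `(w_k)` is a sequence of nonzero matrices
with `w_k → 0`, `exp(w_k) ∈ S` for all `k`, and `w_k/‖w_k‖ → u`, then the one-parameter
subgroup `{exp(t·u) : t ∈ ℝ}` lies in `S`. -/
theorem one_parameter_subgroup_of_limit
    (m : ℕ) (S : Subgroup (GL (Fin m) ℝ)) (hS : IsClosed (S : Set (GL (Fin m) ℝ)))
    (w : ℕ → Matrix (Fin m) (Fin m) ℝ) (hw0 : ∀ k, w k ≠ 0)
    (hwlim : Filter.Tendsto w Filter.atTop (nhds 0))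
    (hwS : ∀ k, ∃ g ∈ S, (g : Matrix (Fin m) (Fin m) ℝ) = NormedSpace.exp (w k))
    (u : Matrix (Fin m) (Fin m) ℝ)
    (hu : Filter.Tendsto (fun k => ‖w k‖⁻¹ • w k) Filter.atTop (nhds u)) :
    ∀ t : ℝ, ∃ g ∈ S, (g : Matrix (Fin m) (Fin m) ℝ) = NormedSpace.exp (t • u) := by
  intro t
  have hn : Filter.Tendsto (fun k => (⌊t / ‖w k‖⌋ : ℝ) * ‖w k‖) Filter.atTop (nhds t) := by
    have h0 : Filter.Tendsto (fun k => ‖w k‖) Filter.atTop (nhds 0) := by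
      simpa using hwlim.norm
    have h1 : Filter.Tendsto (fun k => t - ‖w k‖) Filter.atTop (nhds t) := by
      simpa using h0.const_sub t
    refine tendsto_of_tendsto_of_tendsto_of_le_of_le h1 tendsto_const_nhds ?_ ?_
    · intro k
      have hp : 0 < ‖w k‖ := norm_pos_iff.mpr (hw0 k)
      have h2 := (Int.sub_one_lt_floor (t / ‖w k‖)).le
      have h3 := mul_le_mul_of_nonneg_right h2 hp.le
      have h4 : t / ‖w k‖ * ‖w k‖ = t := div_mul_cancel₀ t hp.ne'
      show t - ‖w k‖ ≤ _
      nlinarith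
    · intro k
      have hp : 0 < ‖w k‖ := norm_pos_iff.mpr (hw0 k)
      have h3 := mul_le_mul_of_nonneg_right (Int.floor_le (t / ‖w k‖)) hp.le
      have h4 : t / ‖w k‖ * ‖w k‖ = t := div_mul_cancel₀ t hp.ne'
      show _ ≤ t
      nlinarith
  have hlim : Filter.Tendsto (fun k => ⌊t / ‖w k‖⌋ • w k) Filter.atTop (nhds (t • u)) := by
    refine (hn.smul hu).congr ?_
    intro k
    have hp : ‖w k‖ ≠ 0 := norm_ne_zero_iff.mpr (hw0 k)
    rw [smul_smul, mul_assoc, mul_inv_cancel₀ hp, mul_one, Int.cast_smul_eq_zsmul]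
  refine ⟨expGLAux m (t • u), ?_, rfl⟩
  refine hS.mem_of_tendsto (((expGLAux_continuous m).tendsto _).comp hlim)
    (Filter.Eventually.of_forall ?_)
  intro k
  obtain ⟨g, hg, hgw⟩ := hwS k
  have : expGLAux m (⌊t / ‖w k‖⌋ • w k) = g ^ ⌊t / ‖w k‖⌋ := by
    apply Units.ext
    rw [Matrix.coe_units_zpow, hgw, ← Matrix.exp_zsmul]
    rfl
  show expGLAux m (⌊t / ‖w k‖⌋ • w k) ∈ S
  rw [this]
  exact S.zpow_mem hg _
end
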